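/- Let X₀⁺ be a proper subshift of the one-sided full shift X⁺ = 𝒜^ℕ whose word complexity grows at most polynomially (there exist C > 0 and q ≥ 1 with |L_j(X₀⁺)| ≤ C j^q for all j ≥ 1) and which is the smallest subshift containing the supports of all shift-invariant measures carried by X₀⁺. Let (a_j)_{j≥0} be a decreasing sequence of positive reals converging to 0 with a_j ≥ (log j)²/j for all j ≥ 1, and define φ⁺ : X⁺ → ℝ by φ⁺(x) = 0 if x ∈ X₀⁺ and φ⁺(x) = −a_j if dist(x, X₀⁺) = 2^{−j}. Then φ⁺ freezes on X₀⁺: φ⁺ has a freezing phase transition at some β_c > 0, and X₀⁺ is the smallest subshift containing the supports of all measures in ZTA(φ⁺). -/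

import Mathlib

open MeasureTheory Filter Topology
open scoped ENNReal Classical

namespace Freezing

/-- The one-sided configuration space `X⁺ = 𝒜^ℕ`. -/
abbrev Cfg1 (A : Type) : Type := ℕ → A

section Defs

variable {A : Type} [Fintype A] [TopologicalSpace A] [DiscreteTopology A]
  [MeasurableSpace A] [BorelSpace A]

/-- The one-sided shift `σ(x)_i = x_{i+1}`. -/
def shift1 (x : Cfg1 A) : Cfg1 A := fun i => x (i + 1)

/-- Shift-invariance of a measure. -/
def Invariant1 (μ : Measure (Cfg1 A)) : Prop := Measure.map shift1 μ = μ

/-- The cylinder set `[w]` of a word `w` of length `n`. -/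
def cyl1 (n : ℕ) (w : Fin n → A) : Set (Cfg1 A) := { x | ∀ i : Fin n, x i = w i }

/-- Measure-theoretic entropy `h(μ) = inf_{n ≥ 1} (1/n) Σ_w (-μ[w] log μ[w])`. -/
noncomputable def entropy1 (μ : Measure (Cfg1 A)) : ℝ :=
  ⨅ n : {n : ℕ // 1 ≤ n},
    (n.1 : ℝ)⁻¹ * ∑ w : Fin n.1 → A, Real.negMulLog (μ (cyl1 n.1 w)).toReal

/-- Pressure `p_φ(β) = sup { h(μ) + β ∫ φ dμ }` over shift-invariant probability measures. -/
noncomputable def pressure1 (φ : Cfg1 A → ℝ) (β : ℝ) : ℝ :=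
  sSup { r | ∃ μ : Measure (Cfg1 A), IsProbabilityMeasure μ ∧ Invariant1 μ ∧
    r = entropy1 μ + β * ∫ x, φ x ∂μ }

/-- The set of equilibrium states of `βφ`. -/
def ES1 (φ : Cfg1 A → ℝ) (β : ℝ) : Set (Measure (Cfg1 A)) :=
  { μ | IsProbabilityMeasure μ ∧ Invariant1 μ ∧
      entropy1 μ + β * ∫ x, φ x ∂μ = pressure1 φ β }

/-- `φ` has a freezing phase transition at `βc`. -/
def FreezingPT1 (φ : Cfg1 A → ℝ) (βc : ℝ) : Prop :=
  (∀ β β' : ℝ, βc < β → βc < β' → ES1 φ β = ES1 φ β') ∧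
  (∀ β β' : ℝ, β < βc → βc < β' → ES1 φ β ≠ ES1 φ β')

/-- The zero-temperature accumulation points of `φ`. -/
def ZTA1 (φ : Cfg1 A → ℝ) : Set (Measure (Cfg1 A)) :=
  { μ | IsProbabilityMeasure μ ∧ Invariant1 μ ∧
      ∃ (β : ℕ → ℝ) (μs : ℕ → Measure (Cfg1 A)),
        Tendsto β atTop atTop ∧ (∀ k, μs k ∈ ES1 φ (β k)) ∧
        ∀ f : Cfg1 A → ℝ, Continuous f →
          Tendsto (fun k => ∫ x, f x ∂(μs k)) atTop (𝓝 (∫ x, f x ∂μ)) }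

/-- A one-sided subshift: nonempty, closed, shift-invariant. -/
def IsSubshift1 (X₀ : Set (Cfg1 A)) : Prop :=
  X₀.Nonempty ∧ IsClosed X₀ ∧ ∀ x ∈ X₀, shift1 x ∈ X₀

/-- The language `L_n(X₀)`: words of length `n` appearing at the origin of points of `X₀`. -/
def lang1 (X₀ : Set (Cfg1 A)) (n : ℕ) : Set (Fin n → A) :=
  { w | ∃ x ∈ X₀, ∀ i : Fin n, x i = w i }

/-- Topological entropy `h_top(X₀) = inf_{n ≥ 1} (1/n) log |L_n(X₀)|`. -/
noncomputable def topEnt1 (X₀ : Set (Cfg1 A)) : ℝ :=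
  ⨅ n : {n : ℕ // 1 ≤ n}, (n.1 : ℝ)⁻¹ * Real.log ((lang1 X₀ n.1).ncard)

/-- A measure of maximal entropy on the subshift `X₀`. -/
def IsMME1 (X₀ : Set (Cfg1 A)) (μ : Measure (Cfg1 A)) : Prop :=
  IsProbabilityMeasure μ ∧ Invariant1 μ ∧ μ X₀ = 1 ∧ entropy1 μ = topEnt1 X₀

/-- The metric `dist(x,y) = 2^{-min{i : x_i ≠ y_i}}`. -/
noncomputable def dist1 (x y : Cfg1 A) : ℝ :=
  if x = y then 0 else (2 : ℝ) ^ (-((sInf { i : ℕ | x i ≠ y i } : ℕ) : ℤ))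

/-- Distance from a point to a subshift. -/
noncomputable def distToSub1 (X₀ : Set (Cfg1 A)) (x : Cfg1 A) : ℝ :=
  sInf { r | ∃ y ∈ X₀, r = dist1 x y }

/-- The (topological) support of a measure: points all of whose open neighbourhoods have
positive measure. -/
def supp1 (μ : Measure (Cfg1 A)) : Set (Cfg1 A) :=
  { x | ∀ U : Set (Cfg1 A), IsOpen U → x ∈ U → 0 < μ U }

end Defs

/-!
A word of length `2 ^ r` is encoded dyadically: a word of the language of `X₀` is listed directly,
and every other word is encoded by encoding its two halves. As `X₀` has polynomially many words,
listing costs only `γ (r + 1)`. So each scale `2 ^ (j + 1)` at which a configuration leaves the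
language adds at most `γ j / 2 ^ (j + 1)` per letter, and the Gibbs inequality bounds the entropy
of an invariant measure by `γ` times the integral of the sum of these defects.

If the longest admissible prefix of `x` has length `l`, only the scales beyond `l` contribute, so
the defect is of order `(log l) / l`, hence at most a constant multiple of `-φ x`. The entropy is
therefore dominated by the penalty once `β` is large, and the pressure is then zero. The uniform
Bernoulli measure makes it positive for small `β`. Past the first zero `βc` of the nonincreasing
pressure, a measure with `∫ φ < 0` would have given positive pressure slightly earlier, so the
equilibrium states are exactly the invariant measures carried by `X₀`. These form a weakly closed
set, which is thus also the set of zero-temperature accumulation points.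
-/

section Words

variable {A : Type}

/-- The word `x₀ … x_{n-1}` formed by the first `n` letters of `x`. -/
def prefixWord (n : ℕ) (x : Cfg1 A) : Fin n → A := fun i => x i

/-- The cylinder neighbourhood of order `n` of `X₀`: the configurations whose first `n` letters
form a word of the language of `X₀`. -/
def cylNhd (X₀ : Set (Cfg1 A)) (n : ℕ) : Set (Cfg1 A) := {x | prefixWord n x ∈ lang1 X₀ n}

lemma mem_cylNhd_iff {X₀ : Set (Cfg1 A)} {n : ℕ} {x : Cfg1 A} :
    x ∈ cylNhd X₀ n ↔ (X₀ ∩ PiNat.cylinder x n).Nonempty :=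
  exists_congr fun _ => and_congr_right fun _ => Fin.forall_iff

lemma subset_cylNhd (X₀ : Set (Cfg1 A)) (n : ℕ) : X₀ ⊆ cylNhd X₀ n :=
  fun x hx => ⟨x, hx, fun _ => rfl⟩

lemma cylNhd_congr {x y : Cfg1 A} {m n : ℕ} (hy : y ∈ PiNat.cylinder x n) (hmn : m ≤ n) :
    y ∈ cylNhd X₀ m ↔ x ∈ cylNhd X₀ m := by
  rw [mem_cylNhd_iff, mem_cylNhd_iff, PiNat.mem_cylinder_iff_eq.1 (PiNat.cylinder_anti x hmn hy)]

lemma preimage_prefixWord_singleton (n : ℕ) (w : Fin n → A) :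
    prefixWord n ⁻¹' {w} = cyl1 n w := by
  ext x
  simp [prefixWord, cyl1, funext_iff]

lemma shift1_iterate_apply (m : ℕ) (x : Cfg1 A) (i : ℕ) : shift1^[m] x i = x (i + m) := by
  induction m generalizing x with
  | zero => rfl
  | succ m ih => rw [Function.iterate_succ_apply, ih, shift1, add_assoc, add_comm m 1, add_comm 1]

lemma prefixWord_add (m n : ℕ) (x : Cfg1 A) :
    prefixWord (m + n) x = Fin.append (prefixWord m x) (prefixWord n (shift1^[m] x)) := by
  funext i
  refine Fin.addCases (fun i => ?_) (fun i => ?_) i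
  · simp [prefixWord]
  · simp [prefixWord, shift1_iterate_apply, add_comm]

end Words

section PrefixMeasurability

variable {A : Type} [MeasurableSpace A]

lemma measurable_prefixWord (n : ℕ) : Measurable (prefixWord n : Cfg1 A → Fin n → A) := by
  unfold prefixWord
  fun_prop

lemma measurable_shift1 : Measurable (shift1 : Cfg1 A → Cfg1 A) := by
  unfold shift1
  fun_prop

lemma Invariant1.measurePreserving_iterate {μ : Measure (Cfg1 A)} (hμ : Invariant1 μ) (m : ℕ) :
    MeasurePreserving shift1^[m] μ μ :=
  MeasurePreserving.iterate ⟨measurable_shift1, hμ⟩ m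

variable [MeasurableSingletonClass A]

lemma measurableSet_cylNhd [Countable A] (X₀ : Set (Cfg1 A)) (n : ℕ) :
    MeasurableSet (cylNhd X₀ n) :=
  measurable_prefixWord n (MeasurableSet.of_discrete (s := lang1 X₀ n))

lemma integrable_comp_prefixWord [Finite A] {n : ℕ} (μ : Measure (Cfg1 A)) [IsFiniteMeasure μ]
    (f : (Fin n → A) → ℝ) : Integrable (fun x => f (prefixWord n x)) μ :=
  (Integrable.of_finite (f := f) (μ := μ.map (prefixWord n))).comp_measurable
    (measurable_prefixWord n)

lemma integral_comp_prefixWord [Fintype A] {n : ℕ} (μ : Measure (Cfg1 A)) [IsFiniteMeasure μ]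
    (f : (Fin n → A) → ℝ) :
    ∫ x, f (prefixWord n x) ∂μ = ∑ w, μ.real (cyl1 n w) * f w := by
  rw [← integral_map_of_stronglyMeasurable (measurable_prefixWord n)
    (StronglyMeasurable.of_discrete (f := f)), integral_fintype .of_finite]
  simp only [map_measureReal_apply (measurable_prefixWord n) (measurableSet_singleton _),
    preimage_prefixWord_singleton, smul_eq_mul]

lemma sum_measureReal_cyl1 [Fintype A] (μ : Measure (Cfg1 A)) [IsProbabilityMeasure μ] (n : ℕ) :
    ∑ w : Fin n → A, μ.real (cyl1 n w) = 1 := by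
  simpa using (integral_comp_prefixWord (n := n) μ fun _ => 1).symm

end PrefixMeasurability

lemma negMulLog_le_mul_add_exp_sub {p : ℝ} (hp : 0 ≤ p) (t : ℝ) :
    Real.negMulLog p ≤ p * t + (Real.exp (-t) - p) := by
  rcases hp.eq_or_lt with rfl | hp
  · simp [Real.exp_nonneg]
  have hlog : Real.log (Real.exp (-t) / p) ≤ Real.exp (-t) / p - 1 :=
    Real.log_le_sub_one_of_pos (by positivity)
  rw [Real.log_div (Real.exp_ne_zero _) hp.ne', Real.log_exp] at hlog
  calc Real.negMulLog p = p * t + p * (-t - Real.log p) := by rw [Real.negMulLog]; ring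
    _ ≤ p * t + p * (Real.exp (-t) / p - 1) := by gcongr
    _ = p * t + (Real.exp (-t) - p) := by field_simp

lemma sum_negMulLog_le_sum_mul {ι : Type*} [Fintype ι] {p t : ι → ℝ} (hp : ∀ i, 0 ≤ p i)
    (hp_sum : ∑ i, p i = 1) (ht : ∑ i, Real.exp (-t i) ≤ 1) :
    ∑ i, Real.negMulLog (p i) ≤ ∑ i, p i * t i :=
  calc ∑ i, Real.negMulLog (p i)
      ≤ ∑ i, (p i * t i + (Real.exp (-t i) - p i)) :=
        Finset.sum_le_sum fun i _ => negMulLog_le_mul_add_exp_sub (hp i) (t i)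
    _ = ∑ i, p i * t i + (∑ i, Real.exp (-t i) - 1) := by
        rw [Finset.sum_add_distrib, Finset.sum_sub_distrib, hp_sum]
    _ ≤ ∑ i, p i * t i := by linarith

section Entropy

variable {A : Type} [Fintype A] [MeasurableSpace A]

/-- The Shannon entropy `-∑_w μ[w] log μ[w]` of the first `n` letters under `μ`. -/
noncomputable def blockEntropy (μ : Measure (Cfg1 A)) (n : ℕ) : ℝ :=
  ∑ w : Fin n → A, Real.negMulLog (μ.real (cyl1 n w))

variable (μ : Measure (Cfg1 A)) [IsProbabilityMeasure μ]

lemma blockEntropy_nonneg (n : ℕ) : 0 ≤ blockEntropy μ n :=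
  Finset.sum_nonneg fun _ _ => Real.negMulLog_nonneg measureReal_nonneg measureReal_le_one

lemma entropy1_nonneg : 0 ≤ entropy1 μ :=
  Real.iInf_nonneg fun n => mul_nonneg (by positivity) (blockEntropy_nonneg μ n)

lemma entropy1_le_inv_mul_blockEntropy {n : ℕ} (hn : 1 ≤ n) :
    entropy1 μ ≤ (n : ℝ)⁻¹ * blockEntropy μ n :=
  ciInf_le ⟨0, Set.forall_mem_range.2 fun m : {n : ℕ // 1 ≤ n} =>
    mul_nonneg (by positivity) (blockEntropy_nonneg μ m)⟩ (⟨n, hn⟩ : {n : ℕ // 1 ≤ n})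

end Entropy

section Codes

variable {A : Type} [Fintype A]

/-- `L x` is the length (in natural units) assigned to the first `n` letters of `x` by a code on
words of length `n` whose Kraft sum `∑_w exp (-T w)` is at most `K`. -/
def IsCodeLength (n : ℕ) (K : ℝ) (L : Cfg1 A → ℝ) : Prop :=
  ∃ T : (Fin n → A) → ℝ, (∀ x, L x = T (prefixWord n x)) ∧ ∑ w, Real.exp (-T w) ≤ K

namespace IsCodeLength

variable {m n : ℕ} {K K₁ K₂ : ℝ} {L L₁ L₂ : Cfg1 A → ℝ}

lemma mono (hL : IsCodeLength n K₁ L) (hK : K₁ ≤ K₂) : IsCodeLength n K₂ L := by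
  obtain ⟨T, hT, hsum⟩ := hL
  exact ⟨T, hT, hsum.trans hK⟩

lemma const (n : ℕ) (t : ℝ) :
    IsCodeLength n ((Fintype.card A : ℝ) ^ n * Real.exp (-t)) fun _ : Cfg1 A => t :=
  ⟨fun _ => t, fun _ => rfl, by simp⟩

lemma append (h₁ : IsCodeLength m K₁ L₁) (h₂ : IsCodeLength n K₂ L₂) :
    IsCodeLength (m + n) (K₁ * K₂) fun x => L₁ x + L₂ (shift1^[m] x) := by
  obtain ⟨T₁, hT₁, hsum₁⟩ := h₁
  obtain ⟨T₂, hT₂, hsum₂⟩ := h₂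
  refine ⟨fun w => T₁ ((Fin.appendEquiv m n).symm w).1 + T₂ ((Fin.appendEquiv m n).symm w).2,
    fun x => ?_, ?_⟩
  · have hsplit : (Fin.appendEquiv m n).symm (prefixWord (m + n) x) =
        (prefixWord m x, prefixWord n (shift1^[m] x)) := by
      rw [Equiv.symm_apply_eq, prefixWord_add]
      rfl
    simp only [hT₁, hT₂, hsplit]
  · calc ∑ w, Real.exp (-(T₁ ((Fin.appendEquiv m n).symm w).1 +
          T₂ ((Fin.appendEquiv m n).symm w).2))
        = ∑ p : (Fin m → A) × (Fin n → A), Real.exp (-T₁ p.1) * Real.exp (-T₂ p.2) := by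
          rw [← Equiv.sum_comp (Fin.appendEquiv m n)]
          simp only [Equiv.symm_apply_apply, neg_add, Real.exp_add]
      _ = (∑ u, Real.exp (-T₁ u)) * ∑ v, Real.exp (-T₂ v) := by
          rw [Finset.sum_mul_sum, ← Fintype.sum_prod_type']
      _ ≤ K₁ * K₂ := by
          have hnn₁ : 0 ≤ ∑ u, Real.exp (-T₁ u) := by positivity
          gcongr
          exact hnn₁.trans hsum₁

lemma ite (hL : IsCodeLength n K L) (W : Set (Fin n → A)) (t : ℝ) :
    IsCodeLength n (W.ncard * Real.exp (-t) + K)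
      fun x => if prefixWord n x ∈ W then t else L x := by
  obtain ⟨T, hT, hsum⟩ := hL
  refine ⟨fun w => if w ∈ W then t else T w, fun x => by simp only [hT], ?_⟩
  calc ∑ w, Real.exp (-if w ∈ W then t else T w)
      ≤ ∑ w, ((if w ∈ W then Real.exp (-t) else 0) + Real.exp (-T w)) := by
        gcongr with w
        split_ifs
        · exact le_add_of_nonneg_right (Real.exp_nonneg _)
        · exact (zero_add _).ge
    _ = W.ncard * Real.exp (-t) + ∑ w, Real.exp (-T w) := by
        rw [Finset.sum_add_distrib, ← Finset.sum_filter, Finset.sum_const, nsmul_eq_mul,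
          Set.ncard_eq_toFinset_card', Set.filter_mem_univ_eq_toFinset]
    _ ≤ W.ncard * Real.exp (-t) + K := by gcongr

variable [MeasurableSpace A] [MeasurableSingletonClass A] (μ : Measure (Cfg1 A))

lemma integrable [IsFiniteMeasure μ] (hL : IsCodeLength n K L) : Integrable L μ := by
  obtain ⟨T, hT, -⟩ := hL
  rw [funext hT]
  exact integrable_comp_prefixWord μ T

lemma blockEntropy_le_integral [IsProbabilityMeasure μ] (hL : IsCodeLength n K L) (hK : K ≤ 1) :
    blockEntropy μ n ≤ ∫ x, L x ∂μ := by
  obtain ⟨T, hT, hsum⟩ := hL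
  rw [funext hT, integral_comp_prefixWord]
  exact sum_negMulLog_le_sum_mul (fun _ => measureReal_nonneg) (sum_measureReal_cyl1 μ n)
    (hsum.trans hK)

end IsCodeLength

lemma entropy1_le_log_card [MeasurableSpace A] [MeasurableSingletonClass A]
    (μ : Measure (Cfg1 A)) [IsProbabilityMeasure μ] :
    entropy1 μ ≤ Real.log (Fintype.card A) := by
  have : Nonempty A := μ.nonempty_of_neZero.map (· 0)
  have hcode := IsCodeLength.const (A := A) 1 (Real.log (Fintype.card A))
  rw [Real.exp_neg, Real.exp_log (by exact_mod_cast Fintype.card_pos), pow_one,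
    mul_inv_cancel₀ (by exact_mod_cast Fintype.card_ne_zero)] at hcode
  simpa using (entropy1_le_inv_mul_blockEntropy μ le_rfl).trans
    (by simpa using hcode.blockEntropy_le_integral μ le_rfl)

end Codes

section DyadicCode

variable {A : Type}

/-- Code lengths for words of length `2 ^ r`: an admissible word of length `2 ^ r` is coded
directly, at the cost `γ * (r + 1)`, and any other one by coding its two halves. -/
noncomputable def dyadicCode (X₀ : Set (Cfg1 A)) (γ : ℝ) : ℕ → Cfg1 A → ℝ
  | 0, _ => γ
  | r + 1, x =>
    if x ∈ cylNhd X₀ (2 ^ (r + 1)) then γ * (r + 2)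
    else dyadicCode X₀ γ r x + dyadicCode X₀ γ r (shift1^[2 ^ r] x)

/-- The weighted count `∑_{j < r} j / 2 ^ (j + 1)` over those dyadic scales `2 ^ (j + 1)` at which
`x` is not admissible. It bounds the excess of `dyadicCode` per letter. -/
noncomputable def dyadicDefect (X₀ : Set (Cfg1 A)) (r : ℕ) (x : Cfg1 A) : ℝ :=
  ∑ j ∈ Finset.range r, (cylNhd X₀ (2 ^ (j + 1)))ᶜ.indicator (fun _ => (j : ℝ) / 2 ^ (j + 1)) x

variable {X₀ : Set (Cfg1 A)} {γ : ℝ}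

lemma isCodeLength_dyadicCode [Fintype A] (hA : 2 * (Fintype.card A : ℝ) ≤ Real.exp γ)
    (hlang : ∀ r : ℕ, 4 * ((lang1 X₀ (2 ^ r)).ncard : ℝ) ≤ Real.exp (γ * (r + 1))) (r : ℕ) :
    IsCodeLength (2 ^ r) (1 / 2) (dyadicCode X₀ γ r) := by
  induction r with
  | zero =>
    refine (IsCodeLength.const 1 γ).mono ?_
    rw [pow_one, Real.exp_neg, ← div_eq_mul_inv, div_le_iff₀ (Real.exp_pos _)]
    linarith
  | succ r ih =>
    -- The Kraft budget `1 / 2` is `1 / 4` for the pairs of halves and `1 / 4` for admissible words.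
    have hhalves := ih.append ih
    rw [← two_mul, ← pow_succ'] at hhalves
    refine (hhalves.ite (lang1 X₀ (2 ^ (r + 1))) (γ * (r + 2))).mono ?_
    have hwords : ((lang1 X₀ (2 ^ (r + 1))).ncard : ℝ) * Real.exp (-(γ * (r + 2))) ≤ 1 / 4 := by
      have hr := hlang (r + 1)
      push_cast at hr
      rw [add_assoc, one_add_one_eq_two] at hr
      rw [Real.exp_neg, ← div_eq_mul_inv, div_le_iff₀ (Real.exp_pos _)]
      linarith
    linarith

lemma le_dyadicCode (hγ : 0 ≤ γ) (r : ℕ) (x : Cfg1 A) : γ * (r + 1) ≤ dyadicCode X₀ γ r x := by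
  induction r generalizing x with
  | zero => simp [dyadicCode]
  | succ r ih =>
    rw [dyadicCode]
    push_cast
    split_ifs
    · linarith
    · nlinarith [ih x, ih (shift1^[2 ^ r] x)]

lemma dyadicCode_succ_le (hγ : 0 ≤ γ) (r : ℕ) (x : Cfg1 A) :
    dyadicCode X₀ γ (r + 1) x ≤
      dyadicCode X₀ γ r x + dyadicCode X₀ γ r (shift1^[2 ^ r] x) - γ * r +
        2 ^ (r + 1) * γ *
          (cylNhd X₀ (2 ^ (r + 1)))ᶜ.indicator (fun _ => (r : ℝ) / 2 ^ (r + 1)) x := by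
  by_cases hx : x ∈ cylNhd X₀ (2 ^ (r + 1))
  · rw [dyadicCode, if_pos hx, Set.indicator_of_notMem (Set.notMem_compl_iff.2 hx)]
    linarith [le_dyadicCode (X₀ := X₀) hγ r x, le_dyadicCode (X₀ := X₀) hγ r (shift1^[2 ^ r] x)]
  · rw [dyadicCode, if_neg hx, Set.indicator_of_mem (Set.mem_compl hx)]
    refine le_of_eq ?_
    field_simp
    ring

section Integral

variable [Countable A] [MeasurableSpace A] [MeasurableSingletonClass A] {μ : Measure (Cfg1 A)}

lemma integrable_indicator_compl_cylNhd [IsFiniteMeasure μ] (X₀ : Set (Cfg1 A)) (n : ℕ) (c : ℝ) :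
    Integrable ((cylNhd X₀ n)ᶜ.indicator fun _ => c) μ :=
  (integrable_const c).indicator (measurableSet_cylNhd X₀ n).compl

lemma integrable_dyadicDefect [IsFiniteMeasure μ] (X₀ : Set (Cfg1 A)) (r : ℕ) :
    Integrable (dyadicDefect X₀ r) μ :=
  integrable_finsetSum _ fun _ _ => integrable_indicator_compl_cylNhd ..

lemma integrable_dyadicCode [IsFiniteMeasure μ] (hμ : Invariant1 μ) (X₀ : Set (Cfg1 A)) (γ : ℝ)
    (r : ℕ) : Integrable (dyadicCode X₀ γ r) μ := by
  induction r with
  | zero => exact integrable_const γ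
  | succ r ih =>
    have hshift := (hμ.measurePreserving_iterate (2 ^ r)).integrable_comp_of_integrable ih
    exact Integrable.piecewise (measurableSet_cylNhd X₀ (2 ^ (r + 1)))
      (integrable_const (γ * (r + 2))).integrableOn (ih.add hshift).integrableOn

lemma integral_dyadicCode_le [IsProbabilityMeasure μ] (hμ : Invariant1 μ) (hγ : 0 ≤ γ) (r : ℕ) :
    ∫ x, dyadicCode X₀ γ r x ∂μ ≤ γ * (r + 1) + 2 ^ r * γ * ∫ x, dyadicDefect X₀ r x ∂μ := by
  induction r with
  | zero => simp [dyadicCode, dyadicDefect]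
  | succ r ih =>
    have hσ := hμ.measurePreserving_iterate (2 ^ r)
    have hcode := integrable_dyadicCode hμ X₀ γ r
    have hshift : Integrable (fun x => dyadicCode X₀ γ r (shift1^[2 ^ r] x)) μ :=
      hσ.integrable_comp_of_integrable hcode
    have hind := integrable_indicator_compl_cylNhd (μ := μ) X₀ (2 ^ (r + 1)) ((r : ℝ) / 2 ^ (r + 1))
    have hshift_eq : ∫ x, dyadicCode X₀ γ r (shift1^[2 ^ r] x) ∂μ =
        ∫ x, dyadicCode X₀ γ r x ∂μ := by
      rw [← integral_map hσ.aemeasurable (by rw [hσ.map_eq]; exact hcode.aestronglyMeasurable),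
        hσ.map_eq]
    have hdefect : ∫ x, dyadicDefect X₀ (r + 1) x ∂μ = ∫ x, dyadicDefect X₀ r x ∂μ +
        ∫ x, (cylNhd X₀ (2 ^ (r + 1)))ᶜ.indicator (fun _ => (r : ℝ) / 2 ^ (r + 1)) x ∂μ := by
      rw [← integral_add (integrable_dyadicDefect X₀ r) hind]
      simp only [dyadicDefect, Finset.sum_range_succ]
    have hstep := integral_mono (integrable_dyadicCode hμ X₀ γ (r + 1))
      (((hcode.add hshift).sub (integrable_const (γ * r))).add
        (hind.const_mul (2 ^ (r + 1) * γ))) (dyadicCode_succ_le hγ r)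
    rw [integral_add' ((hcode.add hshift).sub (integrable_const _)) (hind.const_mul _),
      integral_sub' (hcode.add hshift) (integrable_const _), integral_add' hcode hshift,
      integral_const, probReal_univ, one_smul, integral_const_mul, hshift_eq] at hstep
    rw [hdefect]
    push_cast
    rw [pow_succ] at hstep ⊢
    linarith

end Integral

section EntropyBound

variable [Fintype A] [MeasurableSpace A] [MeasurableSingletonClass A] {μ : Measure (Cfg1 A)}
  [IsProbabilityMeasure μ]

lemma entropy1_le_integral_dyadicDefect (hμ : Invariant1 μ) (hγ : 0 ≤ γ)
    (hA : 2 * (Fintype.card A : ℝ) ≤ Real.exp γ)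
    (hlang : ∀ r : ℕ, 4 * ((lang1 X₀ (2 ^ r)).ncard : ℝ) ≤ Real.exp (γ * (r + 1))) (r : ℕ) :
    entropy1 μ ≤ γ * (((r : ℝ) + 1) / 2 ^ r) + γ * ∫ x, dyadicDefect X₀ r x ∂μ :=
  calc entropy1 μ ≤ ((2 ^ r : ℕ) : ℝ)⁻¹ * blockEntropy μ (2 ^ r) :=
        entropy1_le_inv_mul_blockEntropy μ Nat.one_le_two_pow
    _ ≤ ((2 ^ r : ℕ) : ℝ)⁻¹ * ∫ x, dyadicCode X₀ γ r x ∂μ := by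
        gcongr
        exact (isCodeLength_dyadicCode hA hlang r).blockEntropy_le_integral μ (by norm_num)
    _ ≤ ((2 ^ r : ℕ) : ℝ)⁻¹ * (γ * (r + 1) + 2 ^ r * γ * ∫ x, dyadicDefect X₀ r x ∂μ) := by
        gcongr
        exact integral_dyadicCode_le hμ hγ r
    _ = γ * (((r : ℝ) + 1) / 2 ^ r) + γ * ∫ x, dyadicDefect X₀ r x ∂μ := by
        push_cast
        field_simp

lemma tendsto_add_one_div_two_pow :
    Tendsto (fun r : ℕ => ((r : ℝ) + 1) / 2 ^ r) atTop (𝓝 0) := by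
  have hpow := tendsto_pow_const_div_const_pow_of_one_lt 1 (one_lt_two (α := ℝ))
  have hshift := ((tendsto_add_atTop_iff_nat 1).2 hpow).const_mul 2
  rw [mul_zero] at hshift
  refine hshift.congr fun r => ?_
  push_cast
  rw [pow_one, pow_succ]
  ring

lemma entropy1_le_mul_integral (hμ : Invariant1 μ) (hγ : 0 ≤ γ)
    (hA : 2 * (Fintype.card A : ℝ) ≤ Real.exp γ)
    (hlang : ∀ r : ℕ, 4 * ((lang1 X₀ (2 ^ r)).ncard : ℝ) ≤ Real.exp (γ * (r + 1)))
    {f : Cfg1 A → ℝ} (hf : Integrable f μ) (hle : ∀ r x, dyadicDefect X₀ r x ≤ f x) :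
    entropy1 μ ≤ γ * ∫ x, f x ∂μ := by
  have hlim := (tendsto_add_one_div_two_pow.const_mul γ).add_const (γ * ∫ x, f x ∂μ)
  rw [mul_zero, zero_add] at hlim
  refine ge_of_tendsto' hlim fun r => ?_
  have hmono := integral_mono (integrable_dyadicDefect X₀ r) hf (hle r)
  exact (entropy1_le_integral_dyadicDefect hμ hγ hA hlang r).trans (by gcongr)

end EntropyBound

end DyadicCode

lemma exists_le_exp_of_le_mul_pow {N : ℕ → ℝ} {C : ℝ} {q : ℕ}
    (hN : ∀ j : ℕ, 1 ≤ j → N j ≤ C * (j : ℝ) ^ q) (M : ℝ) :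
    ∃ γ : ℝ, 0 ≤ γ ∧ M ≤ Real.exp γ ∧ ∀ r : ℕ, N (2 ^ r) ≤ Real.exp (γ * (r + 1)) := by
  obtain ⟨γ, hγ⟩ := (Filter.eventually_ge_atTop (q : ℝ)).and
    (Real.tendsto_exp_atTop.eventually_ge_atTop (max M C)) |>.exists
  obtain ⟨hq, hMC⟩ := hγ
  have htwo : (2 : ℝ) ≤ Real.exp 1 := by linarith [Real.add_one_le_exp 1]
  refine ⟨γ, (Nat.cast_nonneg q).trans hq, (le_max_left _ _).trans hMC, fun r => ?_⟩
  calc N (2 ^ r) ≤ C * ((2 : ℝ) ^ r) ^ q := by simpa using hN (2 ^ r) Nat.one_le_two_pow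
    _ ≤ Real.exp γ * (Real.exp 1 ^ r) ^ q := by
        gcongr
        exact (le_max_right _ _).trans hMC
    _ = Real.exp (γ + q * r) := by
        rw [← pow_mul, ← Real.exp_nat_mul, ← Real.exp_add]
        push_cast
        ring_nf
    _ ≤ Real.exp (γ * (r + 1)) := by
        gcongr
        nlinarith [(Nat.cast_nonneg r : (0 : ℝ) ≤ r)]

section DistPotential

variable {A : Type} {X₀ : Set (Cfg1 A)} {a : ℕ → ℝ}

/-- The potential `φ⁺` of a sequence `a`: it vanishes on `X₀`, and a configuration outside `X₀`
whose longest admissible prefix has length `j` is given the value `-a j`. By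
`distToSub1_eq_zpow_longestPrefix`, `j` is also the exponent of the distance to `X₀`. -/
noncomputable def distPotential (X₀ : Set (Cfg1 A)) (a : ℕ → ℝ) : Cfg1 A → ℝ :=
  X₀ᶜ.indicator fun x => -a (PiNat.longestPrefix x X₀)

lemma distPotential_of_mem {x : Cfg1 A} (hx : x ∈ X₀) : distPotential X₀ a x = 0 :=
  Set.indicator_of_notMem (Set.notMem_compl_iff.2 hx) _

lemma distPotential_of_notMem {x : Cfg1 A} (hx : x ∉ X₀) :
    distPotential X₀ a x = -a (PiNat.longestPrefix x X₀) :=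
  Set.indicator_of_mem (Set.mem_compl hx) _

lemma dyadicDefect_eq_zero_of_mem {x : Cfg1 A} (hx : x ∈ X₀) (r : ℕ) : dyadicDefect X₀ r x = 0 :=
  Finset.sum_eq_zero fun _ _ =>
    Set.indicator_of_notMem (Set.notMem_compl_iff.2 (subset_cylNhd X₀ _ hx)) _

lemma dist1_of_ne {x y : Cfg1 A} (hxy : x ≠ y) :
    dist1 x y = (2 : ℝ) ^ (-(PiNat.firstDiff x y : ℤ)) := by
  have hleast : IsLeast {i | x i ≠ y i} (PiNat.firstDiff x y) :=
    ⟨PiNat.apply_firstDiff_ne hxy, fun i hi => not_lt.1 fun hlt =>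
      hi (PiNat.apply_eq_of_lt_firstDiff hlt)⟩
  rw [dist1, if_neg hxy, hleast.csInf_eq]

lemma sum_Ico_div_two_pow_le (m r : ℕ) :
    ∑ j ∈ Finset.Ico m r, (j : ℝ) / 2 ^ (j + 1) ≤ ((m : ℝ) + 1) / 2 ^ m := by
  rcases le_total r m with hrm | hmr
  · rw [Finset.Ico_eq_empty_of_le hrm, Finset.sum_empty]
    positivity
  have htelescope : ∑ j ∈ Finset.Ico m r, (j : ℝ) / 2 ^ (j + 1) =
      ((m : ℝ) + 1) / 2 ^ m - ((r : ℝ) + 1) / 2 ^ r := by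
    induction r, hmr using Nat.le_induction with
    | base => simp
    | succ r hmr ih =>
      rw [Finset.sum_Ico_succ_top hmr, ih]
      push_cast
      rw [pow_succ]
      field_simp
      ring
  rw [htelescope]
  exact sub_le_self _ (by positivity)

lemma mul_log_two_mul_div_le {c : ℝ} (hdec : Antitone a)
    (ha : ∀ j : ℕ, 1 ≤ j → c * Real.log j / j ≤ a j) (l : ℕ) :
    c * Real.log 2 * (((Nat.log 2 l : ℝ) + 1) / 2 ^ Nat.log 2 l) ≤ 2 * a l := by
  have hscale := (ha (2 ^ (Nat.log 2 l + 1)) Nat.one_le_two_pow).trans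
    (hdec (Nat.lt_pow_succ_log_self one_lt_two l).le)
  push_cast at hscale
  rw [Real.log_pow, pow_succ] at hscale
  push_cast at hscale
  calc c * Real.log 2 * (((Nat.log 2 l : ℝ) + 1) / 2 ^ Nat.log 2 l)
      = 2 * (c * (((Nat.log 2 l : ℝ) + 1) * Real.log 2) / (2 ^ Nat.log 2 l * 2)) := by
        field_simp
    _ ≤ 2 * a l := by gcongr

variable [TopologicalSpace A] [DiscreteTopology A]

lemma mem_cylNhd_iff_le_longestPrefix (hclosed : IsClosed X₀) (hne : X₀.Nonempty) {x : Cfg1 A}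
    (hx : x ∉ X₀) {n : ℕ} : x ∈ cylNhd X₀ n ↔ n ≤ PiNat.longestPrefix x X₀ := by
  rw [mem_cylNhd_iff]
  refine ⟨fun h => ?_, fun h => ?_⟩
  · by_contra! hlt
    exact h.not_disjoint (PiNat.disjoint_cylinder_of_longestPrefix_lt hclosed hx hlt)
  · exact (PiNat.inter_cylinder_longestPrefix_nonempty hclosed hne x).mono
      (Set.inter_subset_inter_right _ (PiNat.cylinder_anti x h))

lemma distToSub1_eq_zpow_longestPrefix (hclosed : IsClosed X₀) (hne : X₀.Nonempty) {x : Cfg1 A}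
    (hx : x ∉ X₀) : distToSub1 X₀ x = (2 : ℝ) ^ (-(PiNat.longestPrefix x X₀ : ℤ)) := by
  have hxy : ∀ y ∈ X₀, x ≠ y := fun y hy => (ne_of_mem_of_not_mem hy hx).symm
  refine IsLeast.csInf_eq ⟨?_, ?_⟩
  · obtain ⟨y, hy, hyx⟩ := PiNat.inter_cylinder_longestPrefix_nonempty hclosed hne x
    refine ⟨y, hy, ?_⟩
    have hge : PiNat.longestPrefix x X₀ ≤ PiNat.firstDiff x y :=
      (PiNat.mem_cylinder_iff_le_firstDiff (hxy y hy) _).1 ((PiNat.mem_cylinder_comm ..).1 hyx)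
    rw [dist1_of_ne (hxy y hy),
      le_antisymm (PiNat.firstDiff_le_longestPrefix hclosed hx hy) hge]
  · rintro _ ⟨y, hy, rfl⟩
    rw [dist1_of_ne (hxy y hy)]
    exact zpow_le_zpow_right₀ one_le_two
      (by exact_mod_cast neg_le_neg (Nat.cast_le.2
        (PiNat.firstDiff_le_longestPrefix hclosed hx hy)))

lemma eq_distPotential (hclosed : IsClosed X₀) (hne : X₀.Nonempty) {φ : Cfg1 A → ℝ}
    (hφ0 : ∀ x ∈ X₀, φ x = 0)
    (hφ1 : ∀ x ∉ X₀, ∀ j : ℕ, distToSub1 X₀ x = (2 : ℝ) ^ (-(j : ℤ)) → φ x = -a j) :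
    φ = distPotential X₀ a := by
  funext x
  by_cases hx : x ∈ X₀
  · rw [hφ0 x hx, distPotential_of_mem hx]
  · rw [hφ1 x hx _ (distToSub1_eq_zpow_longestPrefix hclosed hne hx), distPotential_of_notMem hx]

lemma longestPrefix_eq_of_mem_cylinder (hclosed : IsClosed X₀) (hne : X₀.Nonempty)
    {x y : Cfg1 A} (hx : x ∉ X₀) (hy : y ∉ X₀)
    (hyx : y ∈ PiNat.cylinder x (PiNat.longestPrefix x X₀ + 1)) :
    PiNat.longestPrefix y X₀ = PiNat.longestPrefix x X₀ := by
  refine le_antisymm ?_ ?_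
  · by_contra! hlt
    exact (Nat.lt_irrefl _) ((mem_cylNhd_iff_le_longestPrefix hclosed hne hx).1
      ((cylNhd_congr hyx le_rfl).1 ((mem_cylNhd_iff_le_longestPrefix hclosed hne hy).2 hlt)))
  · exact (mem_cylNhd_iff_le_longestPrefix hclosed hne hy).1 ((cylNhd_congr hyx (Nat.le_succ _)).2
      ((mem_cylNhd_iff_le_longestPrefix hclosed hne hx).2 le_rfl))

lemma measurable_distPotential [Countable A] [MeasurableSpace A] [BorelSpace A]
    (hclosed : IsClosed X₀) (hne : X₀.Nonempty) (a : ℕ → ℝ) :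
    Measurable (distPotential X₀ a) := by
  have hcont : ContinuousOn (fun x => -a (PiNat.longestPrefix x X₀)) X₀ᶜ := by
    intro x hx
    have hnhds : PiNat.cylinder x (PiNat.longestPrefix x X₀ + 1) ∩ X₀ᶜ ∈ 𝓝[X₀ᶜ] x :=
      inter_mem (mem_nhdsWithin_of_mem_nhds ((PiNat.isOpen_cylinder _ x _).mem_nhds
        (PiNat.self_mem_cylinder x _))) self_mem_nhdsWithin
    refine (continuousWithinAt_const (b := -a (PiNat.longestPrefix x X₀))).congr_of_eventuallyEq
      ?_ rfl
    filter_upwards [hnhds] with y hy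
    rw [longestPrefix_eq_of_mem_cylinder hclosed hne hx hy.2 hy.1]
  rw [distPotential, ← Set.piecewise_eq_indicator]
  exact hcont.measurable_piecewise continuousOn_const hclosed.measurableSet.compl

lemma dyadicDefect_le_of_notMem (hclosed : IsClosed X₀) (hne : X₀.Nonempty) {x : Cfg1 A}
    (hx : x ∉ X₀) (r : ℕ) :
    dyadicDefect X₀ r x ≤ ((Nat.log 2 (PiNat.longestPrefix x X₀) : ℝ) + 1) /
      2 ^ Nat.log 2 (PiNat.longestPrefix x X₀) := by
  set m := Nat.log 2 (PiNat.longestPrefix x X₀)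
  have hadmissible : ∀ j < m, x ∈ cylNhd X₀ (2 ^ (j + 1)) := by
    intro j hj
    have hpos : PiNat.longestPrefix x X₀ ≠ 0 := fun h => by
      simp only [m, h, Nat.log_zero_right, not_lt_zero] at hj
    exact (mem_cylNhd_iff_le_longestPrefix hclosed hne hx).2 (Nat.pow_le_of_le_log hpos hj)
  calc dyadicDefect X₀ r x
      = ∑ j ∈ Finset.Ico m r,
          (cylNhd X₀ (2 ^ (j + 1)))ᶜ.indicator (fun _ => (j : ℝ) / 2 ^ (j + 1)) x := by
        refine (Finset.sum_subset (fun j hj => ?_) fun j hj hjm => ?_).symm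
        · exact Finset.mem_range.2 (Finset.mem_Ico.1 hj).2
        · refine Set.indicator_of_notMem (Set.notMem_compl_iff.2 (hadmissible j ?_)) _
          by_contra! hmj
          exact hjm (Finset.mem_Ico.2 ⟨hmj, Finset.mem_range.1 hj⟩)
    _ ≤ ∑ j ∈ Finset.Ico m r, (j : ℝ) / 2 ^ (j + 1) := by
        gcongr with j
        exact Set.indicator_apply_le' (fun _ => le_rfl) fun _ => by positivity
    _ ≤ ((m : ℝ) + 1) / 2 ^ m := sum_Ico_div_two_pow_le m r

lemma dyadicDefect_le_distPotential (hclosed : IsClosed X₀) (hne : X₀.Nonempty) {c : ℝ}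
    (hc : 0 < c) (hdec : Antitone a) (ha : ∀ j : ℕ, 1 ≤ j → c * Real.log j / j ≤ a j) (r : ℕ)
    (x : Cfg1 A) : dyadicDefect X₀ r x ≤ 2 / (c * Real.log 2) * -distPotential X₀ a x := by
  by_cases hx : x ∈ X₀
  · rw [dyadicDefect_eq_zero_of_mem hx, distPotential_of_mem hx, neg_zero, mul_zero]
  · refine (dyadicDefect_le_of_notMem hclosed hne hx r).trans ?_
    rw [distPotential_of_notMem hx, neg_neg, div_mul_eq_mul_div, le_div_iff₀' (by positivity)]
    exact mul_log_two_mul_div_le hdec ha _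

end DistPotential

section UniformBernoulli

variable (A : Type) [Fintype A] [Nonempty A] [MeasurableSpace A]

/-- The Bernoulli measure on `A^ℕ` whose letters are independent and uniformly distributed. -/
noncomputable def uniformBernoulli : Measure (Cfg1 A) :=
  Measure.infinitePi fun _ => (PMF.uniformOfFintype A).toMeasure

instance : IsProbabilityMeasure (uniformBernoulli A) := by
  unfold uniformBernoulli
  infer_instance

lemma invariant1_uniformBernoulli : Invariant1 (uniformBernoulli A) :=
  Measure.map_infinitePi_infinitePi_of_inj (add_left_injective 1)

variable [MeasurableSingletonClass A]

lemma uniformBernoulli_real_cyl1 (n : ℕ) (w : Fin n → A) :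
    (uniformBernoulli A).real (cyl1 n w) = ((Fintype.card A : ℝ) ^ n)⁻¹ := by
  have hmap : (uniformBernoulli A).map (prefixWord n) =
      Measure.infinitePi fun _ => (PMF.uniformOfFintype A).toMeasure :=
    Measure.map_infinitePi_infinitePi_of_inj Fin.val_injective
  rw [← preimage_prefixWord_singleton, ← map_measureReal_apply (measurable_prefixWord n)
    (measurableSet_singleton w), hmap, measureReal_def, Measure.infinitePi_singleton_of_fintype]
  simp

lemma entropy1_uniformBernoulli :
    entropy1 (uniformBernoulli A) = Real.log (Fintype.card A) := by
  refine (iInf_congr fun n : {n : ℕ // 1 ≤ n} => ?_).trans ciInf_const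
  have hn : (n : ℝ) ≠ 0 := by exact_mod_cast Nat.one_le_iff_ne_zero.1 n.2
  change (n : ℝ)⁻¹ * blockEntropy (uniformBernoulli A) n = _
  simp only [blockEntropy, uniformBernoulli_real_cyl1, Finset.sum_const, Finset.card_univ,
    Fintype.card_fun, Fintype.card_fin, nsmul_eq_mul, Real.negMulLog, Real.log_inv, Real.log_pow]
  push_cast
  field_simp

end UniformBernoulli

/-- The shift-invariant probability measures carried by `X₀`. -/
def carriedMeasures {A : Type} [MeasurableSpace A] (X₀ : Set (Cfg1 A)) : Set (Measure (Cfg1 A)) :=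
  {μ | IsProbabilityMeasure μ ∧ Invariant1 μ ∧ μ X₀ = 1}

section Penalty

variable {A : Type} [MeasurableSpace A]

/-- A bounded measurable potential that vanishes on `X₀` and penalizes (is negative at) all other
configurations. -/
structure IsPenalty (X₀ : Set (Cfg1 A)) (φ : Cfg1 A → ℝ) : Prop where
  measurable : Measurable φ
  bddBelow : BddBelow (Set.range φ)
  nonpos : ∀ x, φ x ≤ 0
  eq_zero_iff : ∀ x, φ x = 0 ↔ x ∈ X₀

lemma isPenalty_distPotential [Countable A] [TopologicalSpace A] [DiscreteTopology A]
    [BorelSpace A] {X₀ : Set (Cfg1 A)} (hclosed : IsClosed X₀) (hne : X₀.Nonempty) {a : ℕ → ℝ}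
    (hpos : ∀ j, 0 < a j) (hdec : Antitone a) : IsPenalty X₀ (distPotential X₀ a) where
  measurable := measurable_distPotential hclosed hne a
  bddBelow := by
    refine ⟨-a 0, Set.forall_mem_range.2 fun x => ?_⟩
    by_cases hx : x ∈ X₀
    · rw [distPotential_of_mem hx]
      exact neg_nonpos.2 (hpos 0).le
    · rw [distPotential_of_notMem hx]
      exact neg_le_neg (hdec (Nat.zero_le _))
  nonpos x := Set.indicator_nonpos (fun _ _ => neg_nonpos.2 (hpos _).le) x
  eq_zero_iff x := by
    refine ⟨fun h => ?_, distPotential_of_mem⟩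
    by_contra hx
    rw [distPotential_of_notMem hx] at h
    exact (hpos _).ne' (neg_eq_zero.1 h)

namespace IsPenalty

variable {X₀ : Set (Cfg1 A)} {φ : Cfg1 A → ℝ} {μ : Measure (Cfg1 A)}

lemma exists_neg_le (hφ : IsPenalty X₀ φ) : ∃ M > 0, ∀ x, -M ≤ φ x := by
  obtain ⟨m, hm⟩ := hφ.bddBelow
  exact ⟨max (-m) 1, by positivity, fun x =>
    (neg_le.1 (le_max_left _ _)).trans (hm (Set.mem_range_self x))⟩

lemma integrable (hφ : IsPenalty X₀ φ) (μ : Measure (Cfg1 A)) [IsFiniteMeasure μ] :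
    Integrable φ μ := by
  obtain ⟨M, -, hM⟩ := hφ.exists_neg_le
  exact .of_bound hφ.measurable.aestronglyMeasurable M
    (.of_forall fun x => (abs_of_nonpos (hφ.nonpos x)).trans_le (neg_le.1 (hM x)))

lemma integral_nonpos (hφ : IsPenalty X₀ φ) (μ : Measure (Cfg1 A)) : ∫ x, φ x ∂μ ≤ 0 :=
  MeasureTheory.integral_nonpos hφ.nonpos

lemma exists_neg_le_integral (hφ : IsPenalty X₀ φ) :
    ∃ M > 0, ∀ μ : Measure (Cfg1 A), IsProbabilityMeasure μ → -M ≤ ∫ x, φ x ∂μ := by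
  obtain ⟨M, hM, hle⟩ := hφ.exists_neg_le
  refine ⟨M, hM, fun μ _ => ?_⟩
  simpa using integral_mono (integrable_const (-M)) (hφ.integrable μ) hle

lemma integral_eq_zero_iff [IsProbabilityMeasure μ] (hφ : IsPenalty X₀ φ) :
    ∫ x, φ x ∂μ = 0 ↔ μ X₀ = 1 := by
  have hX₀ : X₀ = φ ⁻¹' {0} := Set.ext fun x => (hφ.eq_zero_iff x).symm
  rw [← neg_eq_zero, ← integral_neg, integral_eq_zero_iff_of_nonneg
    (fun x => neg_nonneg.2 (hφ.nonpos x)) (hφ.integrable μ).neg, hX₀,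
    ← mem_ae_iff_prob_eq_one (hφ.measurable (measurableSet_singleton 0))]
  exact Filter.eventually_congr (.of_forall fun x => neg_eq_zero)

variable [Fintype A] [MeasurableSingletonClass A] {β β' : ℝ}

lemma le_pressure1 (hφ : IsPenalty X₀ φ) [IsProbabilityMeasure μ] (hμ : Invariant1 μ) (β : ℝ) :
    entropy1 μ + β * ∫ x, φ x ∂μ ≤ pressure1 φ β := by
  obtain ⟨M, hM, hle⟩ := hφ.exists_neg_le_integral
  refine le_csSup ⟨Real.log (Fintype.card A) + |β| * M, ?_⟩ ⟨μ, ‹_›, hμ, rfl⟩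
  rintro _ ⟨ν, hν, -, rfl⟩
  have habs : |∫ x, φ x ∂ν| ≤ M := abs_le.2 ⟨hle ν hν, (hφ.integral_nonpos ν).trans hM.le⟩
  have hmul : β * ∫ x, φ x ∂ν ≤ |β| * M :=
    (le_abs_self _).trans ((abs_mul _ _).trans_le (by gcongr))
  exact add_le_add (entropy1_le_log_card ν) hmul

lemma entropy1_le_pressure1 (hφ : IsPenalty X₀ φ) (hμ : μ ∈ carriedMeasures X₀) (β : ℝ) :
    entropy1 μ ≤ pressure1 φ β := by
  obtain ⟨hprob, hinv, hcarried⟩ := hμ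
  simpa [hφ.integral_eq_zero_iff.2 hcarried] using hφ.le_pressure1 hinv β

lemma antitone_pressure1 (hφ : IsPenalty X₀ φ) (hne : (carriedMeasures X₀).Nonempty) :
    Antitone (pressure1 φ) := by
  intro β β' hβ
  obtain ⟨μ, hprob, hinv, -⟩ := hne
  refine csSup_le ⟨_, μ, hprob, hinv, rfl⟩ ?_
  rintro _ ⟨ν, hν, hνinv, rfl⟩
  have hmul := mul_le_mul_of_nonpos_right hβ (hφ.integral_nonpos ν)
  linarith [hφ.le_pressure1 hνinv β]

lemma ES1_eq_carriedMeasures (hφ : IsPenalty X₀ φ) (hne : (carriedMeasures X₀).Nonempty)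
    (hzero : pressure1 φ β ≤ 0) (hβ : β < β') : ES1 φ β' = carriedMeasures X₀ := by
  have hnonpos : pressure1 φ β' ≤ 0 := (hφ.antitone_pressure1 hne hβ.le).trans hzero
  have hnonneg : 0 ≤ pressure1 φ β' := by
    obtain ⟨ν, hν⟩ := hne
    have := hν.1
    exact (entropy1_nonneg ν).trans (hφ.entropy1_le_pressure1 hν β')
  ext μ
  refine ⟨fun ⟨hprob, hinv, heq⟩ => ⟨hprob, hinv, hφ.integral_eq_zero_iff.1 ?_⟩,
    fun hμ => ⟨hμ.1, hμ.2.1, ?_⟩⟩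
  · refine le_antisymm (hφ.integral_nonpos μ) ?_
    by_contra! hneg
    have hmul := mul_lt_mul_of_neg_right hβ hneg
    linarith [hφ.le_pressure1 hinv β]
  · have := hμ.1
    rw [hφ.integral_eq_zero_iff.2 hμ.2.2, mul_zero, add_zero]
    exact le_antisymm (hφ.entropy1_le_pressure1 hμ β')
      (hnonpos.trans (entropy1_nonneg μ))

lemma exists_pos_le_of_pressure1_nonpos [Nontrivial A] (hφ : IsPenalty X₀ φ) :
    ∃ b > 0, ∀ β, pressure1 φ β ≤ 0 → b ≤ β := by
  obtain ⟨M, hM, hle⟩ := hφ.exists_neg_le_integral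
  have hlog : 0 < Real.log (Fintype.card A) :=
    Real.log_pos (by exact_mod_cast Fintype.one_lt_card)
  refine ⟨Real.log (Fintype.card A) / M, div_pos hlog hM, fun β hβ => ?_⟩
  have hfree := (hφ.le_pressure1 (invariant1_uniformBernoulli A) β).trans hβ
  rw [entropy1_uniformBernoulli] at hfree
  have hint := hφ.integral_nonpos (uniformBernoulli A)
  have hβ_pos : 0 < β := by
    by_contra! hβ_nonpos
    linarith [mul_nonneg_of_nonpos_of_nonpos hβ_nonpos hint]
  rw [div_le_iff₀ hM]
  linarith [mul_le_mul_of_nonneg_left (hle (uniformBernoulli A) inferInstance) hβ_pos.le]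

lemma exists_freezing [Nontrivial A] (hφ : IsPenalty X₀ φ) (hne : (carriedMeasures X₀).Nonempty)
    (hzero : ∃ β, pressure1 φ β ≤ 0) :
    ∃ βc, 0 < βc ∧ FreezingPT1 φ βc ∧ ∀ β > βc, ES1 φ β = carriedMeasures X₀ := by
  obtain ⟨b, hb, hble⟩ := hφ.exists_pos_le_of_pressure1_nonpos
  have hfrozen : ∀ β > sInf {β | pressure1 φ β ≤ 0}, ES1 φ β = carriedMeasures X₀ := by
    intro β hβ
    obtain ⟨β', hβ', hlt⟩ := exists_lt_of_csInf_lt hzero hβ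
    exact hφ.ES1_eq_carriedMeasures hne hβ' hlt
  refine ⟨sInf {β | pressure1 φ β ≤ 0}, hb.trans_le (le_csInf hzero hble),
    ⟨fun β β' hβ hβ' => (hfrozen β hβ).trans (hfrozen β' hβ').symm, fun β β' hβ _ heq => ?_⟩,
    hfrozen⟩
  obtain ⟨μ, hμ⟩ := hne
  obtain ⟨β₀, hβ₀⟩ := hzero
  have hμES : μ ∈ ES1 φ β := by rwa [heq, hfrozen β' ‹_›]
  have hpressure : pressure1 φ β ≤ 0 := by
    have := hμ.1
    rw [← hμES.2.2, hφ.integral_eq_zero_iff.2 hμ.2.2, mul_zero, add_zero]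
    exact (hφ.entropy1_le_pressure1 hμ β₀).trans hβ₀
  exact notMem_of_lt_csInf hβ ⟨b, hble⟩ hpressure

end IsPenalty

end Penalty

section ZeroTemperature

variable {A : Type} [MeasurableSpace A] [TopologicalSpace A] {X₀ : Set (Cfg1 A)}

lemma supp1_subset_of_isClosed (hclosed : IsClosed X₀) {μ : Measure (Cfg1 A)}
    (hμ : μ X₀ᶜ = 0) : supp1 μ ⊆ X₀ := by
  intro x hx
  by_contra hx₀
  exact (hx X₀ᶜ hclosed.isOpen_compl hx₀).ne' hμ

variable [DiscreteTopology A]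

lemma carriedMeasures_nonempty [Nontrivial A] (hne : X₀.Nonempty)
    (hsmall : ∀ Z, IsSubshift1 Z → (∀ μ ∈ carriedMeasures X₀, supp1 μ ⊆ Z) → X₀ ⊆ Z) :
    (carriedMeasures X₀).Nonempty := by
  by_contra! hempty
  obtain ⟨x, hx⟩ := hne
  obtain ⟨d, hd⟩ := exists_ne (x 0)
  have hsub : IsSubshift1 {(fun _ => d : Cfg1 A)} :=
    ⟨Set.singleton_nonempty _, isClosed_singleton, by rintro _ rfl; rfl⟩
  have hx_eq : x = fun _ => d := hsmall _ hsub (by simp [hempty]) hx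
  exact hd (congrFun hx_eq 0).symm

variable [Fintype A] [BorelSpace A]

lemma ZTA1_eq_carriedMeasures (hclosed : IsClosed X₀) {φ : Cfg1 A → ℝ} {βc : ℝ}
    (hES : ∀ β > βc, ES1 φ β = carriedMeasures X₀) : ZTA1 φ = carriedMeasures X₀ := by
  ext μ
  constructor
  · rintro ⟨hprob, hinv, β, μs, hβ, hμs, hconv⟩
    refine ⟨hprob, hinv, le_antisymm prob_le_one ?_⟩
    let P (k : ℕ) : ProbabilityMeasure (Cfg1 A) := ⟨μs k, (hμs k).1⟩
    have hlim : Tendsto P atTop (𝓝 ⟨μ, hprob⟩) :=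
      ProbabilityMeasure.tendsto_iff_forall_integral_tendsto.2 fun f => hconv f f.continuous
    have hone : (fun k => (P k : Measure (Cfg1 A)) X₀) =ᶠ[atTop] fun _ => 1 := by
      filter_upwards [hβ.eventually_gt_atTop βc] with k hk
      exact ((hES (β k) hk).subset (hμs k)).2.2
    calc (1 : ℝ≥0∞) = atTop.limsup fun k => (P k : Measure (Cfg1 A)) X₀ := by
          rw [limsup_congr hone, limsup_const]
      _ ≤ μ X₀ := ProbabilityMeasure.limsup_measure_closed_le_of_tendsto hlim hclosed
  · intro hμ
    refine ⟨hμ.1, hμ.2.1, fun k => βc + 1 + k, fun _ => μ,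
      tendsto_atTop_add_const_left _ _ tendsto_natCast_atTop_atTop, fun k => ?_,
      fun _ _ => tendsto_const_nhds⟩
    rwa [hES _ (by linarith [(Nat.cast_nonneg k : (0 : ℝ) ≤ k)])]

end ZeroTemperature

lemma exists_pressure1_distPotential_nonpos {A : Type} [Fintype A] [TopologicalSpace A]
    [DiscreteTopology A] [MeasurableSpace A] [BorelSpace A] {X₀ : Set (Cfg1 A)}
    (hclosed : IsClosed X₀) (hne : X₀.Nonempty)
    (hpoly : ∃ (C : ℝ) (q : ℕ), ∀ j : ℕ, 1 ≤ j → ((lang1 X₀ j).ncard : ℝ) ≤ C * (j : ℝ) ^ q)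
    {a : ℕ → ℝ} (hpos : ∀ j, 0 < a j) (hdec : Antitone a) {c : ℝ} (hc : 0 < c)
    (ha : ∀ j : ℕ, 1 ≤ j → c * Real.log j / j ≤ a j) :
    ∃ β, pressure1 (distPotential X₀ a) β ≤ 0 := by
  obtain ⟨C, q, hC⟩ := hpoly
  obtain ⟨γ, hγ, hA, hlang⟩ := exists_le_exp_of_le_mul_pow
    (N := fun j => 4 * ((lang1 X₀ j).ncard : ℝ)) (C := 4 * C) (q := q)
    (fun j hj => by linarith [hC j hj]) (2 * Fintype.card A)
  refine ⟨γ * (2 / (c * Real.log 2)), Real.sSup_nonpos ?_⟩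
  rintro _ ⟨μ, hprob, hinv, rfl⟩
  have hint := (isPenalty_distPotential hclosed hne hpos hdec).integrable μ
  have hentropy := entropy1_le_mul_integral hinv hγ hA hlang
    (hint.neg.const_mul (2 / (c * Real.log 2)))
    (dyadicDefect_le_distPotential hclosed hne hc hdec ha)
  simp only [Pi.neg_apply, integral_const_mul, integral_neg] at hentropy
  linarith

theorem statement13_general {A : Type} [Fintype A] [TopologicalSpace A] [DiscreteTopology A]
    [MeasurableSpace A] [BorelSpace A]
    {X₀ : Set (Cfg1 A)} (hsub : IsSubshift1 X₀) (hproper : X₀ ≠ Set.univ)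
    (hpoly : ∃ (C : ℝ) (q : ℕ), ∀ j : ℕ, 1 ≤ j → ((lang1 X₀ j).ncard : ℝ) ≤ C * (j : ℝ) ^ q)
    (hsmall : ∀ Z : Set (Cfg1 A), IsSubshift1 Z →
      (∀ μ : Measure (Cfg1 A), IsProbabilityMeasure μ → Invariant1 μ → μ X₀ = 1 →
        supp1 μ ⊆ Z) → X₀ ⊆ Z)
    {a : ℕ → ℝ} (hpos : ∀ j, 0 < a j) (hdec : Antitone a)
    {c : ℝ} (hc : 0 < c) (ha : ∀ j : ℕ, 1 ≤ j → c * Real.log j / j ≤ a j)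
    {φ : Cfg1 A → ℝ}
    (hφ0 : ∀ x ∈ X₀, φ x = 0)
    (hφ1 : ∀ x ∉ X₀, ∀ j : ℕ, distToSub1 X₀ x = (2 : ℝ) ^ (-(j : ℤ)) → φ x = -(a j)) :
    ∃ βc : ℝ, 0 < βc ∧ FreezingPT1 φ βc ∧
      (∀ μ ∈ ZTA1 φ, supp1 μ ⊆ X₀) ∧
      (∀ Z : Set (Cfg1 A), IsSubshift1 Z → (∀ μ ∈ ZTA1 φ, supp1 μ ⊆ Z) → X₀ ⊆ Z) := by
  obtain ⟨hne, hclosed, -⟩ := hsub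
  have hA : Nontrivial A := not_subsingleton_iff_nontrivial.1 fun _ =>
    hproper (Subsingleton.eq_univ_of_nonempty hne)
  obtain rfl := eq_distPotential hclosed hne hφ0 hφ1
  have hsmallest : ∀ Z, IsSubshift1 Z → (∀ μ ∈ carriedMeasures X₀, supp1 μ ⊆ Z) → X₀ ⊆ Z :=
    fun Z hZ hsupp => hsmall Z hZ fun μ hprob hinv hX₀ => hsupp μ ⟨hprob, hinv, hX₀⟩
  obtain ⟨βc, hβc, hfreeze, hES⟩ :=
    (isPenalty_distPotential hclosed hne hpos hdec).exists_freezing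
      (carriedMeasures_nonempty hne hsmallest)
      (exists_pressure1_distPotential_nonpos hclosed hne hpoly hpos hdec hc ha)
  refine ⟨βc, hβc, hfreeze, ?_, ?_⟩ <;> rw [ZTA1_eq_carriedMeasures hclosed hES]
  · rintro μ ⟨hprob, -, hX₀⟩
    exact supp1_subset_of_isClosed hclosed
      ((prob_compl_eq_zero_iff hclosed.measurableSet).2 hX₀)
  · exact hsmallest

lemma log_two_mul_log_le_log_sq (j : ℕ) : Real.log 2 * Real.log j ≤ Real.log j ^ 2 := by
  rcases lt_or_ge j 2 with hj | hj
  · interval_cases j <;> simp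
  · rw [sq]
    gcongr
    exact_mod_cast hj

/-- **Corollary 5.4.** Let `X₀⁺` be a proper subshift of `X⁺ = 𝒜^ℕ` with at
most polynomial word complexity which is the smallest subshift containing the supports of all
shift-invariant measures carried by `X₀⁺`. If `(a_j)` is a decreasing positive null sequence
with `a_j ≥ (log j)²/j`, then the potential `φ⁺` (vanishing on `X₀⁺`, equal to `-a_j` where
`dist(x, X₀⁺) = 2^{-j}`) freezes on `X₀⁺`: it has a freezing phase transition at some
`β_c > 0` and `X₀⁺` is the smallest subshift containing the supports of all measures in
`ZTA(φ⁺)`. -/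
theorem statement13 (A : Type) [Fintype A] [TopologicalSpace A] [DiscreteTopology A]
    [MeasurableSpace A] [BorelSpace A]
    (X₀ : Set (Cfg1 A)) (hsub : IsSubshift1 X₀) (hproper : X₀ ≠ Set.univ)
    (hpoly : ∃ (C : ℝ) (q : ℕ), 0 < C ∧ 1 ≤ q ∧
      ∀ j : ℕ, 1 ≤ j → ((lang1 X₀ j).ncard : ℝ) ≤ C * (j : ℝ) ^ q)
    (hsupp : ∀ μ : Measure (Cfg1 A), IsProbabilityMeasure μ → Invariant1 μ → μ X₀ = 1 →
      supp1 μ ⊆ X₀)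
    (hsmall : ∀ Z : Set (Cfg1 A), IsSubshift1 Z →
      (∀ μ : Measure (Cfg1 A), IsProbabilityMeasure μ → Invariant1 μ → μ X₀ = 1 →
        supp1 μ ⊆ Z) → X₀ ⊆ Z)
    (a : ℕ → ℝ) (hpos : ∀ j, 0 < a j) (hdec : Antitone a)
    (hlim : Tendsto a atTop (𝓝 0))
    (ha : ∀ j : ℕ, 1 ≤ j → (Real.log j) ^ 2 / j ≤ a j)
    (φ : Cfg1 A → ℝ)
    (hφ0 : ∀ x ∈ X₀, φ x = 0)
    (hφ1 : ∀ x ∉ X₀, ∀ j : ℕ, distToSub1 X₀ x = (2 : ℝ) ^ (-(j : ℤ)) → φ x = -(a j)) :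
    ∃ βc : ℝ, 0 < βc ∧ FreezingPT1 φ βc ∧
      (∀ μ ∈ ZTA1 φ, supp1 μ ⊆ X₀) ∧
      (∀ Z : Set (Cfg1 A), IsSubshift1 Z → (∀ μ ∈ ZTA1 φ, supp1 μ ⊆ Z) → X₀ ⊆ Z) := by
  obtain ⟨C, q, -, -, hC⟩ := hpoly
  exact statement13_general hsub hproper ⟨C, q, hC⟩ hsmall hpos hdec (Real.log_pos one_lt_two)
    (fun j hj => (div_le_div_of_nonneg_right (log_two_mul_log_le_log_sq j) j.cast_nonneg).trans
      (ha j hj)) hφ0 hφ1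

end Freezing
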